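/- arXiv:2504.00807 — 2 statements merged into one kernel-verified Lean document; each statement's English description precedes it below -/
import Mathlib

section
/- Let T = (V, root, par) be a narrow rooted directed tree, so that the Cesàro operator C_T is bounded on ℓ²(V), and let C_T* denote its Hilbert-space adjoint. Then every λ ∈ ℂ with |λ − 1| < 1 is an eigenvalue of C_T*: there exists a nonzero g ∈ ℓ²(V) with C_T* g = λ g. -/
noncomputable section

open scoped ENNReal

/-- A rooted directed tree encoded by a vertex set `V`, a root, and a parent map. -/
structure TreeData (V : Type) where
  root : V
  par : V → V
  par_root : par root = root
  hroot : ∀ v : V, ∃ n : ℕ, par^[n] v = root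

namespace TreeData

variable {V : Type}

open scoped Classical in
/-- The depth of a vertex: the least `n` with `par^[n] v = root`. -/
def dep (T : TreeData V) (v : V) : ℕ := Nat.find (T.hroot v)

/-- The Cesàro map `Λ_T`. -/
def cesaro (T : TreeData V) (f : V → ℂ) : V → ℂ := fun v =>
  ((T.dep v : ℂ) + 1)⁻¹ * ∑ j ∈ Finset.range (T.dep v + 1), f (T.par^[j] v)

/-- The `n`-th level `Chi^⟨n⟩(root)`: vertices of depth `n`. -/
def level (T : TreeData V) (n : ℕ) : Set V := {v : V | T.dep v = n}

/-- The set of children of a vertex. -/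
def chi (T : TreeData V) (u : V) : Set V := {v : V | v ≠ T.root ∧ T.par v = u}

end TreeData

/-- The Hilbert space `ℓ²(V)` of square-summable complex functions on `V`. -/
abbrev L2 (V : Type) : Type := lp (fun _ : V => ℂ) 2

namespace TreeData

variable {V : Type}

theorem dep_root (T : TreeData V) : T.dep T.root = 0 := by
  classical
  unfold dep
  rw [Nat.find_eq_zero]
  rfl

theorem dep_child (T : TreeData V) {v : V} (hv : v ≠ T.root) :
    T.dep v = T.dep (T.par v) + 1 := by
  classical
  unfold dep
  rw [Nat.find_eq_iff]
  refine ⟨Nat.find_spec (T.hroot (T.par v)), fun n hn => ?_⟩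
  cases n with
  | zero => exact hv
  | succ n => exact Nat.find_min (T.hroot (T.par v)) (Nat.lt_of_succ_lt_succ hn)

theorem chi_finite (T : TreeData V) (m : ℕ) (hm : ∀ n : ℕ, (T.level n).encard ≤ m) (u : V) :
    (T.chi u).Finite := by
  have h : (T.level (T.dep u + 1)).Finite :=
    Set.finite_of_encard_le_coe (hm _)
  refine h.subset ?_
  rintro v ⟨hv, rfl⟩
  exact T.dep_child hv

/-- The set of descendants. -/
def desc (T : TreeData V) (u : V) : Set V := {w | ∃ k, T.par^[k] w = u}

theorem exists_child (T : TreeData V) (m : ℕ) (hm : ∀ n : ℕ, (T.level n).encard ≤ m) (u : V)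
    (hu : (T.desc u).Infinite) : ∃ v ∈ T.chi u, (T.desc v).Infinite := by
  classical
  by_contra! h
  apply hu
  have hf : ({u} ∪ ⋃ v ∈ T.chi u, T.desc v).Finite := by
    refine (Set.finite_singleton u).union ((T.chi_finite m hm u).biUnion ?_)
    intro v hv
    simpa using h v hv
  refine hf.subset ?_
  intro w hw
  have hw' : ∃ k, T.par^[k] w = u := hw
  obtain ⟨k, hk, hmin⟩ : ∃ k, T.par^[k] w = u ∧ ∀ j < k, T.par^[j] w ≠ u :=
    ⟨Nat.find hw', Nat.find_spec hw', fun j hj => Nat.find_min hw' hj⟩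
  cases k with
  | zero => left; simpa using hk
  | succ k =>
    right
    rw [Function.iterate_succ_apply'] at hk
    refine Set.mem_biUnion (x := T.par^[k] w) ⟨?_, hk⟩ ⟨k, rfl⟩
    intro hr
    apply hmin k (Nat.lt_succ_self k)
    rw [← hk, hr, T.par_root]

theorem exists_path [Infinite V] (T : TreeData V) (m : ℕ)
    (hm : ∀ n : ℕ, (T.level n).encard ≤ m) :
    ∃ p : ℕ → V, (∀ n, T.dep (p n) = n) ∧ ∀ n, T.par (p (n + 1)) = p n := by
  have h0 : (T.desc T.root).Infinite := by
    have : T.desc T.root = Set.univ := Set.eq_univ_of_forall T.hroot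
    rw [this]; exact Set.infinite_univ
  choose! c hc hc' using T.exists_child m hm
  have hinf : ∀ n, (T.desc (c^[n] T.root)).Infinite := by
    intro n
    induction n with
    | zero => exact h0
    | succ n ih => rw [Function.iterate_succ_apply']; exact hc' _ ih
  have hpar : ∀ n, T.par (c^[n + 1] T.root) = c^[n] T.root := by
    intro n
    rw [Function.iterate_succ_apply']
    exact (hc _ (hinf n)).2
  refine ⟨fun n => c^[n] T.root, ?_, hpar⟩
  intro n
  induction n with
  | zero => exact T.dep_root
  | succ n ih =>
    have h1 : c^[n + 1] T.root ≠ T.root := by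
      rw [Function.iterate_succ_apply']
      exact (hc _ (hinf n)).1
    have := T.dep_child h1
    rw [hpar n] at this
    simp only at ih ⊢
    omega

theorem iterate_path (T : TreeData V) (p : ℕ → V) (hp : ∀ n, T.par (p (n + 1)) = p n)
    (j : ℕ) : ∀ n, T.par^[j] (p (n + j)) = p n := by
  induction j with
  | zero => intro n; rfl
  | succ j ih =>
    intro n
    rw [Function.iterate_succ_apply, ← Nat.add_assoc, hp, ih]

theorem cesaro_path (T : TreeData V) (p : ℕ → V) (hd : ∀ n, T.dep (p n) = n)
    (hp : ∀ n, T.par (p (n + 1)) = p n) (f : V → ℂ) (n : ℕ) :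
    T.cesaro f (p n) = ((n : ℂ) + 1)⁻¹ * ∑ k ∈ Finset.range (n + 1), f (p k) := by
  unfold cesaro
  rw [hd, ← Finset.sum_range_reflect (fun k => f (p k))]
  congr 1
  refine Finset.sum_congr rfl fun j hj => ?_
  have hj' : j ≤ n := by simpa [Nat.lt_succ_iff] using hj
  obtain ⟨k, rfl⟩ := Nat.exists_eq_add_of_le' hj'
  rw [T.iterate_path p hp]
  congr 2
  omega

end TreeData

/-- Coefficients of the eigenvector along an infinite path. -/
def eigCoeff (mu : ℂ) : ℕ → ℂ
  | 0 => 1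
  | n + 1 => (1 - mu / ((n : ℂ) + 1)) * eigCoeff mu n

theorem half_lt_re_inv {lam : ℂ} (hlam : ‖lam - 1‖ < 1) : 1 < 2 * (lam⁻¹).re := by
  have h0 : lam ≠ 0 := by rintro rfl; simp at hlam
  have h1 : Complex.normSq (lam - 1) < 1 := by
    rw [Complex.normSq_eq_norm_sq]
    nlinarith [norm_nonneg (lam - 1)]
  have h2 : 0 < Complex.normSq lam := Complex.normSq_pos.2 h0
  rw [Complex.inv_re, ← mul_div_assoc, lt_div_iff₀ h2]
  simp [Complex.normSq_apply] at h1 ⊢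
  nlinarith

theorem eigCoeff_step (mu : ℂ) (n : ℕ) :
    ((n : ℝ) + 1) * ‖eigCoeff mu (n + 1)‖ ^ 2 =
      ‖eigCoeff mu n‖ ^ 2 * ((n : ℝ) + 1 - 2 * mu.re + ‖mu‖ ^ 2 / ((n : ℝ) + 1)) := by
  have hn : (n : ℝ) + 1 ≠ 0 := by positivity
  have h : ‖1 - mu / ((n : ℂ) + 1)‖ ^ 2 =
      1 - 2 * mu.re / ((n : ℝ) + 1) + ‖mu‖ ^ 2 / ((n : ℝ) + 1) ^ 2 := by
    have e : mu / ((n : ℂ) + 1) = ((((n : ℝ) + 1)⁻¹ : ℝ) : ℂ) * mu := by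
      push_cast; rw [div_eq_inv_mul]
    rw [e, ← Complex.normSq_eq_norm_sq, ← Complex.normSq_eq_norm_sq]
    simp only [Complex.normSq_apply, Complex.sub_re, Complex.sub_im, Complex.one_re,
      Complex.one_im, Complex.re_ofReal_mul, Complex.im_ofReal_mul]
    field_simp
    ring
  rw [eigCoeff, norm_mul, mul_pow, h]
  field_simp

theorem eigCoeff_summable (mu : ℂ) (hmu : 1 < 2 * mu.re) :
    Summable fun n => ‖eigCoeff mu n‖ ^ 2 := by
  obtain ⟨K, hK⟩ := exists_nat_gt (‖mu‖ ^ 2 / ((2 * mu.re - 1) / 2))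
  set d := (2 * mu.re - 1) / 2 with hd
  have hd0 : 0 < d := by rw [hd]; linarith
  rw [div_lt_iff₀ hd0] at hK
  rw [← summable_nat_add_iff K]
  set c : ℕ → ℝ := fun n => ‖eigCoeff mu n‖ ^ 2 with hc
  have hc0 : ∀ n, 0 ≤ c n := fun n => by positivity
  have key : ∀ n, d * c (n + K) ≤
      ((n + K : ℕ) : ℝ) * c (n + K) - ((n + 1 + K : ℕ) : ℝ) * c (n + 1 + K) := by
    intro n
    have h := eigCoeff_step mu (n + K)
    have e : n + 1 + K = n + K + 1 := by omega
    rw [e]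
    have hq : ‖mu‖ ^ 2 / (((n + K : ℕ) : ℝ) + 1) ≤ d := by
      rw [div_le_iff₀ (by positivity)]
      push_cast
      have : (0 : ℝ) ≤ n := by positivity
      nlinarith
    have h2 := mul_le_mul_of_nonneg_left hq (hc0 (n + K))
    have h3 : (((n + K + 1 : ℕ)) : ℝ) * c (n + K + 1) =
      c (n + K) * (((n + K : ℕ) : ℝ) + 1 - 2 * mu.re + ‖mu‖ ^ 2 / (((n + K : ℕ) : ℝ) + 1)) := by
      rw [← h]; push_cast; rfl
    rw [h3]
    have h4 : 2 * mu.re = 2 * d + 1 := by rw [hd]; ring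
    rw [h4]
    nlinarith
  refine summable_of_sum_range_le (c := (K : ℝ) * c K / d) (fun n => hc0 _) fun n => ?_
  rw [le_div_iff₀ hd0, mul_comm, Finset.mul_sum]
  have tel := Finset.sum_range_sub' (fun n : ℕ => ((n + K : ℕ) : ℝ) * c (n + K)) n
  calc _ ≤ _ := Finset.sum_le_sum fun i _ => key i
    _ = _ := tel
    _ ≤ _ := by
      have : 0 ≤ ((n + K : ℕ) : ℝ) * c (n + K) := mul_nonneg (by positivity) (hc0 _)
      simp only [Nat.zero_add]
      linarith

theorem eigCoeff_tendsto (mu : ℂ) (hmu : 1 < 2 * mu.re) :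
    Filter.Tendsto (eigCoeff mu) Filter.atTop (nhds 0) := by
  have h := (eigCoeff_summable mu hmu).tendsto_atTop_zero
  rw [tendsto_zero_iff_norm_tendsto_zero]
  have h2 := h.sqrt
  simpa [Real.sqrt_sq (norm_nonneg _)] using h2

theorem eigCoeff_sum (lam : ℂ) (h0 : lam ≠ 0) (N n : ℕ) :
    ∑ k ∈ Finset.range (n + N), (if N ≤ k then ((k : ℂ) + 1)⁻¹ * eigCoeff lam⁻¹ k else 0) =
      lam * (eigCoeff lam⁻¹ N - eigCoeff lam⁻¹ (n + N)) := by
  induction n with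
  | zero =>
    rw [Nat.zero_add, sub_self, mul_zero]
    refine Finset.sum_eq_zero fun k hk => if_neg ?_
    simpa using hk
  | succ n ih =>
    have e : n + 1 + N = n + N + 1 := by omega
    rw [e, Finset.sum_range_succ, ih, if_pos (by omega), eigCoeff]
    have : (((n + N : ℕ) : ℂ) + 1) ≠ 0 := Nat.cast_add_one_ne_zero (n + N)
    field_simp
    ring

/-- For a narrow rooted directed tree, every `λ` with `|λ - 1| < 1` is an
eigenvalue of the adjoint `C_T*` of the bounded Cesàro operator. -/
theorem adjoint_cesaro_eigenvalues {V : Type} [Countable V] [Infinite V]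
    (T : TreeData V) (m : ℕ) (hm : ∀ n : ℕ, (T.level n).encard ≤ m)
    (C : L2 V →L[ℂ] L2 V) (hC : ∀ (f : L2 V) (v : V), C f v = T.cesaro ⇑f v)
    (lam : ℂ) (hlam : ‖lam - 1‖ < 1) :
    ∃ g : L2 V, g ≠ 0 ∧ ContinuousLinearMap.adjoint C g = lam • g := by
  classical
  have h0 : lam ≠ 0 := by rintro rfl; simp at hlam
  have hmu := half_lt_re_inv hlam
  obtain ⟨p, hd, hp⟩ := T.exists_path m hm
  have hinj : Function.Injective p := fun a b hab => by rw [← hd a, ← hd b, hab]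
  set b := eigCoeff lam⁻¹ with hb
  set g0 : V → ℂ := Function.extend p b 0 with hg0
  have hgp : ∀ n, g0 (p n) = b n := fun n => hinj.extend_apply _ _ _
  have hgn : ∀ v ∉ Set.range p, g0 v = 0 := fun v hv => by
    rw [hg0, Function.extend_apply' _ _ _ hv]; rfl
  have hmem : Memℓp g0 2 := by
    apply memℓp_gen
    rw [← hinj.summable_iff]
    · have := eigCoeff_summable lam⁻¹ hmu
      simpa [Function.comp_def, hgp] using this
    · intro v hv
      simp [hgn v hv]
  let g : L2 V := ⟨g0, hmem⟩
  have hg : ∀ v, g v = g0 v := fun v => rfl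
  refine ⟨g, ?_, ?_⟩
  · intro h
    have h1 : g (p 0) = 1 := by rw [hg, hgp, hb]; rfl
    rw [h] at h1
    simp at h1
  · ext u
    have e1 : ContinuousLinearMap.adjoint C g u =
        inner ℂ (C (lp.single 2 u (1 : ℂ))) g := by
      rw [← ContinuousLinearMap.adjoint_inner_right, lp.inner_single_left]
      simp
    have hs := lp.hasSum_inner (𝕜 := ℂ) (C (lp.single 2 u (1 : ℂ))) g
    rw [← hinj.hasSum_iff (by intro v hv; simp [hg, hgn v hv])] at hs
    have hs' := hs.tendsto_sum_nat
    rw [e1]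
    have hterm : ∀ n, ((fun v => inner ℂ (C (lp.single 2 u (1 : ℂ)) v) (g v)) ∘ p) n =
        (((n : ℂ) + 1)⁻¹ * b n) * 
          ∑ k ∈ Finset.range (n + 1), (if p k = u then (1 : ℂ) else 0) := by
      intro n
      simp only [Function.comp_apply, hC, T.cesaro_path p hd hp, hg, hgp, lp.coeFn_single,
        Pi.single_apply]
      simp only [RCLike.inner_apply, map_mul, map_inv₀, map_add, map_sum, map_natCast, map_one,
        apply_ite (starRingEnd ℂ), map_zero]
      ring
    have goal' : lam * g0 u = (lam • g) u := rfl
    rw [← goal']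
    by_cases hu : u ∈ Set.range p
    · obtain ⟨N, rfl⟩ := hu
      rw [hgp]
      have hterm' : ∀ n, ((fun v => inner ℂ (C (lp.single 2 (p N) (1 : ℂ)) v) (g v)) ∘ p) n =
          if N ≤ n then ((n : ℂ) + 1)⁻¹ * b n else 0 := by
        intro n
        rw [hterm]
        simp [hinj.eq_iff, Nat.lt_succ_iff]
      simp only [hterm'] at hs'
      refine tendsto_nhds_unique ((Filter.tendsto_add_atTop_iff_nat N).2 hs') ?_
      simp only [hb, eigCoeff_sum lam h0]
      have ht := (Filter.tendsto_add_atTop_iff_nat N).2 (eigCoeff_tendsto lam⁻¹ hmu)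
      simpa using (ht.const_sub (eigCoeff lam⁻¹ N)).const_mul lam
    · rw [hgn u hu, mul_zero]
      refine tendsto_nhds_unique hs' ?_
      have hz : ∀ n, ((fun v => inner ℂ (C (lp.single 2 u (1 : ℂ)) v) (g v)) ∘ p) n = 0 := by
        intro n
        rw [hterm, Finset.sum_eq_zero, mul_zero]
        intro k _
        exact if_neg fun h => hu ⟨k, h⟩
      simp only [hz, Finset.sum_const_zero]
      exact tendsto_const_nhds
end
end

section
/- Let T = (V, root, par) be a narrow rooted directed tree admitting two distinct paths, i.e. two sequences (v_n)_{n≥0} and (w_n)_{n≥0} with v_0 = w_0 = root, v_{n+1} ∈ Chi(v_n), w_{n+1} ∈ Chi(w_n) for all n, and v_n ≠ w_n for some n. Then for every λ ∈ ℂ with 0 < |λ − 1| < 1, the eigenspace ker(C_T* − λ·I) of the adjoint of the bounded Cesàro operator C_T has dimension at least 2. -/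
noncomputable section

open scoped ENNReal

theorem aux_raabe (b : ℕ → ℝ) (t : ℝ) (ht : 1 < t) (N : ℕ) (hb : ∀ n, 0 ≤ b n)
    (h : ∀ n, N ≤ n → b (n+1) * (n+1) ≤ b n * (n+1-t)) : Summable b := by
  rw [← summable_nat_add_iff N]
  apply summable_of_sum_range_le (c := N * b N / (t-1)) (fun n => hb _)
  intro n
  have key : (t-1) * ∑ i ∈ Finset.range n, b (i+N) ≤ N * b N - ((n+N:ℕ):ℝ) * b (n+N) := by
    induction n with
    | zero => simp
    | succ k ih =>
      rw [Finset.sum_range_succ, mul_add]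
      have h1 := h (k+N) (by omega)
      have e : k + 1 + N = k + N + 1 := by omega
      rw [e]
      push_cast at *
      nlinarith
  rw [le_div_iff₀ (by linarith)]
  have := mul_nonneg (Nat.cast_nonneg (α := ℝ) (n+N)) (hb (n+N))
  linarith

/-- coefficients -/
def auxA (lam : ℂ) (K n : ℕ) : ℂ :=
  if n < K then 0 else ∏ j ∈ Finset.Ico K n, (1 - 1 / (lam * ((j:ℂ)+1)))

theorem auxA_lt (lam : ℂ) {K n : ℕ} (h : n < K) : auxA lam K n = 0 := by simp [auxA, h]

theorem auxA_self (lam : ℂ) (K : ℕ) : auxA lam K K = 1 := by simp [auxA]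

theorem auxA_succ (lam : ℂ) {K n : ℕ} (h : K ≤ n) :
    auxA lam K (n+1) = auxA lam K n * (1 - 1 / (lam * ((n:ℂ)+1))) := by
  simp only [auxA]
  rw [if_neg (by omega), if_neg (by omega), Finset.prod_Ico_succ_top h]

theorem auxA_summable (lam : ℂ) (h1 : ‖lam - 1‖ < 1) (K : ℕ) :
    Summable fun n => ‖auxA lam K n‖ ^ 2 := by
  have h0 : lam ≠ 0 := by rintro rfl; simp at h1
  set z := lam⁻¹ with hz
  have hs : 1 < 2 * z.re := by
    have h2 : Complex.normSq (lam - 1) < 1 := by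
      rw [Complex.normSq_eq_norm_sq]
      nlinarith [norm_nonneg (lam - 1)]
    have hp : 0 < Complex.normSq lam := Complex.normSq_pos.2 h0
    rw [hz, Complex.inv_re, ← mul_div_assoc, lt_div_iff₀ hp]
    simp only [Complex.normSq_apply, Complex.sub_re, Complex.sub_im, Complex.one_re,
      Complex.one_im] at *
    nlinarith
  obtain ⟨t, ht1, ht2⟩ := exists_between hs
  set c := Complex.normSq z with hc
  have hcn : 0 ≤ c := Complex.normSq_nonneg _
  obtain ⟨N, hN⟩ := exists_nat_gt (c / (2 * z.re - t))
  apply aux_raabe _ t ht1 (max N K) (fun n => by positivity)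
  intro n hn
  have hK : K ≤ n := le_trans (le_max_right _ _) hn
  have hn' : (N:ℝ) ≤ n := by exact_mod_cast le_trans (le_max_left _ _) hn
  rw [auxA_succ lam hK, norm_mul, mul_pow, mul_assoc]
  apply mul_le_mul_of_nonneg_left _ (by positivity)
  have hpos : (0:ℝ) < (n:ℝ) + 1 := by positivity
  have e : (1 - 1 / (lam * ((n:ℂ)+1))) = 1 - z * (((1 / ((n:ℝ)+1)) : ℝ) : ℂ) := by
    rw [hz]; push_cast
    have : (n:ℂ) + 1 ≠ 0 := by exact_mod_cast hpos.ne'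
    field_simp
  have e2 : ‖(1 - 1 / (lam * ((n:ℂ)+1)))‖^2
      = 1 - 2 * z.re * (1 / ((n:ℝ)+1)) + c * (1 / ((n:ℝ)+1))^2 := by
    rw [e, ← Complex.normSq_eq_norm_sq, hc]
    simp only [Complex.normSq_apply, Complex.sub_re, Complex.sub_im, Complex.one_re,
      Complex.one_im, Complex.re_mul_ofReal, Complex.im_mul_ofReal]
    ring
  rw [e2]
  have e3 : (1 - 2 * z.re * (1 / ((n:ℝ)+1)) + c * (1 / ((n:ℝ)+1))^2) * ((n:ℝ)+1)
      = n + 1 - 2 * z.re + c / ((n:ℝ)+1) := by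
    field_simp
  rw [e3]
  have : c / ((n:ℝ)+1) ≤ 2 * z.re - t := by
    rw [div_le_iff₀ hpos]
    rw [div_lt_iff₀ (by linarith)] at hN
    nlinarith
  linarith

theorem auxA_tendsto (lam : ℂ) (h1 : ‖lam - 1‖ < 1) (K : ℕ) :
    Filter.Tendsto (auxA lam K) Filter.atTop (nhds 0) := by
  have h := (auxA_summable lam h1 K).tendsto_atTop_zero
  rw [tendsto_zero_iff_norm_tendsto_zero]
  have := h.sqrt
  simpa using this

section paths
variable {V : Type} (T : TreeData V) (p : ℕ → V)

theorem aux_par (hp : ∀ n : ℕ, p (n + 1) ∈ T.chi (p n)) (n k : ℕ) : T.par^[k] (p (n + k)) = p n := by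
  induction k with
  | zero => rfl
  | succ k ih =>
    rw [Function.iterate_succ_apply, ← add_assoc, (hp (n+k)).2, ih]

theorem aux_dep (hp0 : p 0 = T.root) (hp : ∀ n : ℕ, p (n + 1) ∈ T.chi (p n))
    (n : ℕ) : T.dep (p n) = n := by
  classical
  unfold TreeData.dep
  rw [Nat.find_eq_iff]
  constructor
  · rw [← hp0]; simpa using aux_par T p hp 0 n
  · intro k hk h
    obtain ⟨j, rfl⟩ : ∃ j, n = (j+1) + k := ⟨n - k - 1, by omega⟩
    rw [aux_par T p hp] at h
    exact (hp j).1 h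

theorem aux_inj (hp0 : p 0 = T.root) (hp : ∀ n : ℕ, p (n + 1) ∈ T.chi (p n))
    : Function.Injective p := by
  intro a b h
  rw [← aux_dep T p hp0 hp a, h, aux_dep T p hp0 hp b]

open scoped Classical in
/-- eigenvector candidate -/
def auxG (lam : ℂ) (K : ℕ) (u : V) : ℂ :=
  if u = p (T.dep u) then auxA lam K (T.dep u) else 0

theorem auxG_path (hp0 : p 0 = T.root) (hp : ∀ n : ℕ, p (n + 1) ∈ T.chi (p n))
    (lam : ℂ) (K n : ℕ) : auxG T p lam K (p n) = auxA lam K n := by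
  simp [auxG, aux_dep T p hp0 hp]

theorem auxG_off (lam : ℂ) (K : ℕ) (u : V) (h : u ∉ Set.range p) : auxG T p lam K u = 0 := by
  unfold auxG
  rw [if_neg]
  intro e
  exact h ⟨_, e.symm⟩

theorem auxG_mem (hp0 : p 0 = T.root) (hp : ∀ n : ℕ, p (n + 1) ∈ T.chi (p n))
    (lam : ℂ) (h1 : ‖lam - 1‖ < 1) (K : ℕ) :
    Memℓp (E := fun _ : V => ℂ) (auxG T p lam K) 2 := by
  apply memℓp_gen
  have : Summable fun u => ‖auxG T p lam K u‖ ^ 2 := by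
    rw [← (aux_inj T p hp0 hp).summable_iff]
    · have := auxA_summable lam h1 K
      refine this.congr fun n => ?_
      simp [auxG_path T p hp0 hp]
    · intro u hu
      simp [auxG_off T p lam K u hu]
  simpa using this

open scoped Classical in
theorem aux_cesaro (hp0 : p 0 = T.root) (hp : ∀ n : ℕ, p (n + 1) ∈ T.chi (p n))
    (u : V) (n : ℕ) (f : V → ℂ) :
    T.cesaro f (p n) = ((n:ℂ)+1)⁻¹ * ∑ j ∈ Finset.range (n+1), f (p j) := by
  unfold TreeData.cesaro
  rw [aux_dep T p hp0 hp]
  congr 1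
  rw [← Finset.sum_range_reflect (fun j => f (p j))]
  apply Finset.sum_congr rfl
  intro j hj
  have hj' : j ≤ n := by simpa [Nat.lt_succ_iff] using hj
  congr 1
  have := aux_par T p hp (n - j) j
  rw [Nat.sub_add_cancel hj'] at this
  rw [this]; congr 1

theorem aux_partial (lam : ℂ) (h0 : lam ≠ 0) (K M : ℕ) (hM : K ≤ M) (N : ℕ) (hN : M ≤ N) :
    ∑ n ∈ Finset.Ico M N, ((n:ℂ)+1)⁻¹ * auxA lam K n = lam * (auxA lam K M - auxA lam K N) := by
  induction N, hN using Nat.le_induction with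
  | base => simp
  | succ N hN ih =>
    rw [Finset.sum_Ico_succ_top hN, ih, auxA_succ lam (hM.trans hN)]
    have : (N:ℂ) + 1 ≠ 0 := by exact_mod_cast Nat.succ_ne_zero N
    field_simp
    ring

open scoped Classical in
theorem aux_adj (hp0 : p 0 = T.root) (hp : ∀ n : ℕ, p (n + 1) ∈ T.chi (p n))
    (C : L2 V →L[ℂ] L2 V) (hC : ∀ (f : L2 V) (u : V), C f u = T.cesaro ⇑f u)
    (lam : ℂ) (h1 : ‖lam - 1‖ < 1) (K : ℕ) (u : V) :
    (ContinuousLinearMap.adjoint C ⟨auxG T p lam K, auxG_mem T p hp0 hp lam h1 K⟩ : L2 V) u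
      = lam * auxG T p lam K u + (if u = p (T.dep u) ∧ T.dep u < K then lam else 0) := by
  have h0 : lam ≠ 0 := by rintro rfl; simp at h1
  set g : L2 V := ⟨auxG T p lam K, auxG_mem T p hp0 hp lam h1 K⟩ with hg
  have hgu : ∀ x, g x = auxG T p lam K x := fun x => rfl
  set e : L2 V := lp.single 2 u (1:ℂ) with he
  have heu : ∀ x, e x = if x = u then 1 else 0 := by
    intro x
    rw [he, lp.coeFn_single, Pi.single_apply]
  have k1 : (ContinuousLinearMap.adjoint C g : L2 V) u = inner ℂ (C e) g := by
    rw [← ContinuousLinearMap.adjoint_inner_right, he, lp.inner_single_left]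
    simp
  have k2 := lp.hasSum_inner (𝕜 := ℂ) (C e) g
  rw [← k1, ← (aux_inj T p hp0 hp).hasSum_iff] at k2
  swap
  · intro x hx
    rw [hgu, auxG_off T p lam K x hx]; simp
  have k3 := k2.tendsto_sum_nat
  refine tendsto_nhds_unique k3 ?_
  have hterm : ∀ n, ((fun i => inner ℂ ((C e) i) (g i)) ∘ p) n
      = (if ∃ j ≤ n, p j = u then ((n:ℂ)+1)⁻¹ else 0) * auxA lam K n := by
    intro n
    simp only [Function.comp]
    rw [hgu, auxG_path T p hp0 hp, hC, aux_cesaro T p hp0 hp u]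
    have hs : ∑ j ∈ Finset.range (n+1), e (p j) = if ∃ j ≤ n, p j = u then 1 else 0 := by
      simp only [heu]
      split_ifs with h
      · obtain ⟨j, hj, rfl⟩ := h
        simp only [(aux_inj T p hp0 hp).eq_iff]
        rw [Finset.sum_ite_eq' (Finset.range (n+1))]
        simp [hj]
      · apply Finset.sum_eq_zero
        intro j hj
        rw [if_neg]
        intro h'
        exact h ⟨j, by simpa [Nat.lt_succ_iff] using hj, h'⟩
    rw [hs]
    rw [RCLike.inner_apply]
    split_ifs <;> simp [mul_comm]
  simp only [hterm]
  by_cases hu : u ∈ Set.range p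
  · obtain ⟨k, rfl⟩ := hu
    rw [auxG_path T p hp0 hp, aux_dep T p hp0 hp]
    have hR : lam * auxA lam K k + (if p k = p k ∧ k < K then lam else 0)
        = lam * (auxA lam K (max k K) - 0) := by
      by_cases hk : k < K
      · simp [hk, auxA_lt lam hk, max_eq_right hk.le, auxA_self]
      · simp [hk, max_eq_left (not_lt.1 hk)]
    rw [hR]
    have hl := ((auxA_tendsto lam h1 K).const_sub (auxA lam K (max k K))).const_mul lam
    refine hl.congr' ?_
    filter_upwards [Filter.eventually_ge_atTop (max k K)] with N hN
    rw [← aux_partial lam h0 K (max k K) (le_max_right _ _) N hN]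
    rw [Finset.range_eq_Ico, ← Finset.sum_Ico_consecutive _ (Nat.zero_le (max k K)) hN]
    rw [Finset.sum_eq_zero (s := Finset.Ico 0 (max k K)), zero_add]
    · apply Finset.sum_congr rfl
      intro n hn
      rw [if_pos ⟨k, (le_max_left _ _).trans (Finset.mem_Ico.1 hn).1, rfl⟩]
    · intro n hn
      rcases lt_max_iff.1 (Finset.mem_Ico.1 hn).2 with h | h
      · rw [if_neg, zero_mul]
        rintro ⟨j, hj, hjk⟩
        have := aux_inj T p hp0 hp hjk
        omega
      · rw [auxA_lt lam h, mul_zero]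
  · have hz : ∀ n : ℕ, ¬ ∃ j ≤ n, p j = u := fun n ⟨j, _, h⟩ => hu ⟨j, h⟩
    rw [auxG_off T p lam K u hu, if_neg (fun h => hu ⟨_, h.1.symm⟩)]
    simp [hz]

end paths

/-- If a narrow rooted directed tree admits two distinct paths, then for every
`λ` with `0 < |λ - 1| < 1`, the eigenspace `ker(C_T* - λ I)` has dimension at least `2`. -/
theorem adjoint_cesaro_eigenspace_dim_ge_two {V : Type} [Countable V] [Infinite V]
    (T : TreeData V) (m : ℕ) (hm : ∀ n : ℕ, (T.level n).encard ≤ m)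
    (v w : ℕ → V) (hv0 : v 0 = T.root) (hw0 : w 0 = T.root)
    (hv : ∀ n : ℕ, v (n + 1) ∈ T.chi (v n)) (hw : ∀ n : ℕ, w (n + 1) ∈ T.chi (w n))
    (hvw : ∃ n : ℕ, v n ≠ w n)
    (C : L2 V →L[ℂ] L2 V) (hC : ∀ (f : L2 V) (u : V), C f u = T.cesaro ⇑f u)
    (lam : ℂ) (hlam0 : 0 < ‖lam - 1‖) (hlam1 : ‖lam - 1‖ < 1) :
    2 ≤ Module.rank ℂ
      ↥(LinearMap.ker ((ContinuousLinearMap.adjoint C : L2 V →ₗ[ℂ] L2 V) - lam • 1)) := by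
  classical
  have hA := aux_adj T v hv0 hv C hC lam hlam1
  have hB := aux_adj T w hw0 hw C hC lam hlam1
  set K := Nat.find hvw with hK
  have hKne : v K ≠ w K := Nat.find_spec hvw
  have hKlt : ∀ j < K, v j = w j := fun j hj => not_not.1 (Nat.find_min hvw hj)
  have hK0 : 0 < K := by
    rcases Nat.eq_zero_or_pos K with h | h
    · rw [h, hv0, hw0] at hKne; exact absurd rfl hKne
    · exact h
  let x : L2 V := ⟨auxG T v lam 0, auxG_mem T v hv0 hv lam hlam1 0⟩
  let y1 : L2 V := ⟨auxG T v lam K, auxG_mem T v hv0 hv lam hlam1 K⟩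
  let y2 : L2 V := ⟨auxG T w lam K, auxG_mem T w hw0 hw lam hlam1 K⟩
  have hx : x ∈ LinearMap.ker ((ContinuousLinearMap.adjoint C : L2 V →ₗ[ℂ] L2 V) - lam • 1) := by
    rw [LinearMap.mem_ker]
    have : ContinuousLinearMap.adjoint C x = lam • x := by
      ext u
      rw [hA 0 u]
      simp [x]
    simp [this]
  have hy : y1 - y2 ∈
      LinearMap.ker ((ContinuousLinearMap.adjoint C : L2 V →ₗ[ℂ] L2 V) - lam • 1) := by
    rw [LinearMap.mem_ker]
    have : ContinuousLinearMap.adjoint C (y1 - y2) = lam • (y1 - y2) := by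
      ext u
      rw [map_sub, lp.coeFn_sub, Pi.sub_apply, hA K u, hB K u]
      have hiff : (u = v (T.dep u) ∧ T.dep u < K) ↔ (u = w (T.dep u) ∧ T.dep u < K) := by
        constructor
        · rintro ⟨a, b⟩; exact ⟨by rw [← hKlt _ b]; exact a, b⟩
        · rintro ⟨a, b⟩; exact ⟨by rw [hKlt _ b]; exact a, b⟩
      simp only [hiff]
      rw [lp.coeFn_smul, Pi.smul_apply, lp.coeFn_sub, Pi.sub_apply, smul_eq_mul]
      simp only [y1, y2]
      ring
    simp [this]
  have x0 : x T.root = 1 := by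
    rw [← hv0]; exact (auxG_path T v hv0 hv lam 0 0).trans (auxA_self lam 0)
  have y10 : y1 T.root = 0 := by
    rw [← hv0]; exact (auxG_path T v hv0 hv lam K 0).trans (auxA_lt lam hK0)
  have y20 : y2 T.root = 0 := by
    rw [← hw0]; exact (auxG_path T w hw0 hw lam K 0).trans (auxA_lt lam hK0)
  have y1K : y1 (v K) = 1 := (auxG_path T v hv0 hv lam K K).trans (auxA_self lam K)
  have y2K : y2 (v K) = 0 := by
    change auxG T w lam K (v K) = 0
    unfold auxG
    rw [aux_dep T v hv0 hv, if_neg hKne]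
  have hli : LinearIndependent ℂ ![(⟨x, hx⟩ : LinearMap.ker
      ((ContinuousLinearMap.adjoint C : L2 V →ₗ[ℂ] L2 V) - lam • 1)), ⟨y1 - y2, hy⟩] := by
    rw [LinearIndependent.pair_iff]
    intro s t hst
    have h' : s • x + t • (y1 - y2) = 0 := congrArg Subtype.val hst
    have h'' : ∀ u, s * x u + t * (y1 u - y2 u) = 0 := fun u => by
      have := congrArg (fun f : L2 V => f u) h'
      simp only [lp.coeFn_add, lp.coeFn_smul, lp.coeFn_sub, lp.coeFn_zero] at this
      exact this
    have hs : s = 0 := by simpa [x0, y10, y20] using h'' T.root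
    refine ⟨hs, ?_⟩
    simpa [hs, y1K, y2K] using h'' (v K)
  simpa using hli.cardinal_le_rank
end
end
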